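/- arXiv:1811.11899 — 2 statements merged into one kernel-verified Lean document; each statement's English description precedes it below -/
import Mathlib

section
/- Let C ⊆ ℝⁿ be a nonempty polyhedral set containing 0, that is, C = {x ∈ ℝⁿ : ⟨a_i,x⟩ ≤ β_i for i = 1,…,m} for some finitely many a_i ∈ ℝⁿ and β_i ∈ ℝ, and let rec(C) := {y ∈ ℝⁿ : x + t·y ∈ C for all x ∈ C and all t ≥ 0}. Suppose every nonzero y ∈ {π ∈ ℝⁿ : F(Λ₋(π)) = 0, cπ = 0, ∫_{|u|≤1} ⟨π,u⟩ F(du) ≤ ⟨π,b⟩} ∩ rec(C) belongs to N := {π : cπ = 0, F({u : ⟨π,u⟩ ≠ 0}) = 0, ⟨π,b⟩ = 0}. Then ψ achieves its infimum over C: there exists π* ∈ C ∩ C₀ with ψ(π*) ≤ ψ(π) for all π ∈ C. -/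
open MeasureTheory
open scoped RealInnerProductSpace ENNReal Topology

/-- The extended-real-valued convex function `ψ` from the paper: on the budget-constraint set
`C₀ = {π | F {u | 1 + ⟨π,u⟩ < 0} = 0}` it equals
`−⟨π,b⟩ − ((p−1)/2)⟨π,cπ⟩ − ∫ (p⁻¹((1+⟨π,u⟩)₊)^p − p⁻¹ − ⟨π,u⟩·1_{|u|≤1}) dF`,
and `+∞` outside of `C₀`. -/
noncomputable def psi (n : ℕ) (p : ℝ) (F : Measure (EuclideanSpace ℝ (Fin n)))
    (b : EuclideanSpace ℝ (Fin n))
    (c : EuclideanSpace ℝ (Fin n) →ₗ[ℝ] EuclideanSpace ℝ (Fin n))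
    (π : EuclideanSpace ℝ (Fin n)) : EReal :=
  if F {u : EuclideanSpace ℝ (Fin n) | 1 + ⟪π, u⟫ < 0} = 0 then
    (((-⟪π, b⟫) - ((p - 1) / 2) * ⟪π, c π⟫ -
      ∫ u, (p⁻¹ * (max (1 + ⟪π, u⟫) 0) ^ p - p⁻¹ -
        Set.indicator {u : EuclideanSpace ℝ (Fin n) | ‖u‖ ≤ 1}
          (fun u => ⟪π, u⟫) u) ∂F : ℝ) : EReal)
  else (⊤ : EReal)

lemma aux_bern_lower {p x : ℝ} (hp0 : 0 < p) (hp1 : p < 1) (hx : -1 ≤ x) :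
    p⁻¹ * (max (1 + x) 0) ^ p - p⁻¹ ≤ x := by
  rw [max_eq_left (by linarith)]
  have h := rpow_one_add_le_one_add_mul_self hx hp0.le hp1.le
  have : p⁻¹ * (1 + x) ^ p ≤ p⁻¹ * (1 + p * x) := by gcongr
  have e : p⁻¹ * (1 + p * x) = p⁻¹ + x := by field_simp
  linarith

lemma aux_bern_upper {p x : ℝ} (hp0 : 0 < p) (hp1 : p < 1) (hx : -1 ≤ x) :
    x - ((1 - p) / p) * x ^ 2 ≤ p⁻¹ * (max (1 + x) 0) ^ p - p⁻¹ := by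
  rw [max_eq_left (by linarith)]
  have key : 1 + p * x - (1 - p) * x ^ 2 ≤ (1 + x) ^ p := by
    rcases eq_or_lt_of_le hx with h | h
    · subst h
      have : (0:ℝ) ≤ (1 + -1) ^ p := Real.rpow_nonneg (by norm_num) _
      nlinarith
    · have h1 := rpow_one_add_le_one_add_mul_self hx (p := 1 - p) (by linarith) (by linarith)
      have h2 : (1 + x) ^ p * (1 + x) ^ (1 - p) = 1 + x := by
        rw [← Real.rpow_add (by linarith)]; simp
      have hd : p ≤ 1 + (1 - p) * x := by nlinarith
      have h3 : 1 + x ≤ (1 + x) ^ p * (1 + (1 - p) * x) := by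
        calc 1 + x = (1 + x) ^ p * (1 + x) ^ (1 - p) := h2.symm
          _ ≤ _ := mul_le_mul_of_nonneg_left h1 (Real.rpow_nonneg (by linarith) _)
      have h4 : (1 + p * x - (1 - p) * x ^ 2) * (1 + (1 - p) * x) ≤ 1 + x := by
        have : 0 ≤ (1 - p) * x ^ 2 * ((1 + (1 - p) * x) - p) :=
          mul_nonneg (mul_nonneg (by linarith) (sq_nonneg _)) (by linarith)
        nlinarith
      exact le_of_mul_le_mul_right (h4.trans h3) (by linarith)
  have : p⁻¹ * (1 + p * x - (1 - p) * x ^ 2) ≤ p⁻¹ * (1 + x) ^ p := by gcongr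
  have e : p⁻¹ * (1 + p * x - (1 - p) * x ^ 2) = p⁻¹ + x - ((1 - p) / p) * x ^ 2 := by field_simp
  linarith

lemma aux_max_rpow_le {p x r : ℝ} (hp0 : 0 < p) (hp1 : p < 1) (hr : 0 ≤ r) (hx : x ≤ r) :
    (max (1 + x) 0) ^ p ≤ 1 + r ^ p := by
  calc (max (1 + x) 0) ^ p ≤ (1 + r) ^ p := by
        apply Real.rpow_le_rpow (le_max_right _ _) _ hp0.le
        exact max_le (by linarith) (by linarith)
    _ ≤ 1 ^ p + r ^ p := Real.rpow_add_le_add_rpow zero_le_one hr hp0.le hp1.le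
    _ = _ := by simp

/-- the integrand -/
noncomputable def JJ (n : ℕ) (p : ℝ) (π u : EuclideanSpace ℝ (Fin n)) : ℝ :=
  p⁻¹ * (max (1 + ⟪π, u⟫) 0) ^ p - p⁻¹ -
        Set.indicator {u : EuclideanSpace ℝ (Fin n) | ‖u‖ ≤ 1}
          (fun u => ⟪π, u⟫) u

/-- tail function -/
noncomputable def TT (n : ℕ) (p : ℝ) (u : EuclideanSpace ℝ (Fin n)) : ℝ :=
  Set.indicator {u : EuclideanSpace ℝ (Fin n) | 1 < ‖u‖} (fun u => ‖u‖ ^ p) u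

noncomputable def gg (n : ℕ) (p : ℝ) (F : Measure (EuclideanSpace ℝ (Fin n)))
    (b : EuclideanSpace ℝ (Fin n))
    (c : EuclideanSpace ℝ (Fin n) →ₗ[ℝ] EuclideanSpace ℝ (Fin n))
    (π : EuclideanSpace ℝ (Fin n)) : ℝ :=
  (-⟪π, b⟫) - ((p - 1) / 2) * ⟪π, c π⟫ - ∫ u, JJ n p π u ∂F

def CC (n : ℕ) (F : Measure (EuclideanSpace ℝ (Fin n))) : Set (EuclideanSpace ℝ (Fin n)) :=
  {π | F {u : EuclideanSpace ℝ (Fin n) | 1 + ⟪π, u⟫ < 0} = 0}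

lemma psi_of_mem {n p F b c π} (h : π ∈ CC n F) : psi n p F b c π = (gg n p F b c π : EReal) := by
  have h' : F {u : EuclideanSpace ℝ (Fin n) | 1 + ⟪π, u⟫ < 0} = 0 := h
  unfold psi
  rw [if_pos h']
  rfl

lemma psi_of_not_mem {n p F b c π} (h : π ∉ CC n F) : psi n p F b c π = ⊤ := by
  have h' : ¬ F {u : EuclideanSpace ℝ (Fin n) | 1 + ⟪π, u⟫ < 0} = 0 := h
  unfold psi
  rw [if_neg h']

lemma ae_of_mem {n F π} (h : π ∈ CC n F) : ∀ᵐ u ∂F, -1 ≤ ⟪π, u⟫ := by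
  have h' : F {u : EuclideanSpace ℝ (Fin n) | 1 + ⟪π, u⟫ < 0} = 0 := h
  rw [ae_iff]
  convert h' using 2
  ext u; simp only [Set.mem_ofPred_eq, not_le]
  constructor <;> intro h <;> linarith

lemma TT_nonneg {n p u} : 0 ≤ TT n p u := by
  unfold TT
  exact Set.indicator_nonneg (fun u _ => Real.rpow_nonneg (norm_nonneg _) _) _

/-- upper bound -/
lemma JJ_le {n : ℕ} {p R : ℝ} (hp0 : 0 < p) (hp1 : p < 1)
    {π u : EuclideanSpace ℝ (Fin n)} (hπ : ‖π‖ ≤ R) (hu : -1 ≤ ⟪π, u⟫) :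
    JJ n p π u ≤ p⁻¹ * R ^ p * TT n p u := by
  unfold JJ TT
  have hR : 0 ≤ R := (norm_nonneg _).trans hπ
  by_cases h : ‖u‖ ≤ 1
  · rw [Set.indicator_of_mem (by exact h), Set.indicator_of_notMem (by simpa using h)]
    have := aux_bern_lower hp0 hp1 hu
    linarith
  · rw [Set.indicator_of_notMem (by exact h), Set.indicator_of_mem (by simpa using h)]
    have hx : ⟪π, u⟫ ≤ R * ‖u‖ := (real_inner_le_norm π u).trans (by gcongr)
    have := aux_max_rpow_le hp0 hp1 (by positivity) hx
    rw [Real.mul_rpow hR (norm_nonneg _)] at this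
    have : p⁻¹ * (max (1 + ⟪π, u⟫) 0) ^ p ≤ p⁻¹ * (1 + R ^ p * ‖u‖ ^ p) := by gcongr
    linarith

lemma JJ_ge {n : ℕ} {p R : ℝ} (hp0 : 0 < p) (hp1 : p < 1)
    {π u : EuclideanSpace ℝ (Fin n)} (hπ : ‖π‖ ≤ R) (hu : -1 ≤ ⟪π, u⟫) :
    - (((1 - p) / p * R ^ 2 + p⁻¹) * min (‖u‖ ^ (2 : ℕ)) 1) ≤ JJ n p π u := by
  unfold JJ
  have hR : 0 ≤ R := (norm_nonneg _).trans hπ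
  have hp2 : 0 ≤ (1 - p) / p := div_nonneg (by linarith) hp0.le
  by_cases h : ‖u‖ ≤ 1
  · rw [Set.indicator_of_mem (by exact h), min_eq_left (by nlinarith [norm_nonneg u])]
    have := aux_bern_upper hp0 hp1 hu
    have hx : ⟪π, u⟫ ^ 2 ≤ R ^ 2 * ‖u‖ ^ 2 := by
      rw [← mul_pow, sq_le_sq, abs_of_nonneg (a := R * ‖u‖) (by positivity)]
      exact (abs_real_inner_le_norm π u).trans (by gcongr)
    have h3 := mul_le_mul_of_nonneg_left hx hp2
    have : 0 ≤ p⁻¹ * ‖u‖ ^ 2 := by positivity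
    linarith
  · rw [Set.indicator_of_notMem (by exact h), min_eq_right (by nlinarith [norm_nonneg u])]
    have h1 : 0 ≤ p⁻¹ * (max (1 + ⟪π, u⟫) 0) ^ p :=
      mul_nonneg (by positivity) (Real.rpow_nonneg (le_max_right _ _) _)
    have : 0 ≤ (1 - p) / p * R ^ 2 := by positivity
    linarith

lemma JJ_abs {n : ℕ} {p R : ℝ} (hp0 : 0 < p) (hp1 : p < 1)
    {π u : EuclideanSpace ℝ (Fin n)} (hπ : ‖π‖ ≤ R) (hu : -1 ≤ ⟪π, u⟫) :
    ‖JJ n p π u‖ ≤ p⁻¹ * R ^ p * TT n p u +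
      ((1 - p) / p * R ^ 2 + p⁻¹) * min (‖u‖ ^ (2 : ℕ)) 1 := by
  have h1 := JJ_le hp0 hp1 hπ hu
  have h2 := JJ_ge hp0 hp1 hπ hu
  have hR : 0 ≤ R := (norm_nonneg _).trans hπ
  have hp2 : 0 ≤ (1 - p) / p := div_nonneg (by linarith) hp0.le
  have h3 : 0 ≤ p⁻¹ * R ^ p * TT n p u :=
    mul_nonneg (mul_nonneg (by positivity) (Real.rpow_nonneg hR _)) TT_nonneg
  have h4 : 0 ≤ ((1 - p) / p * R ^ 2 + p⁻¹) * min (‖u‖ ^ (2 : ℕ)) 1 := by positivity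
  rw [Real.norm_eq_abs, abs_le]
  constructor <;> linarith

lemma JJ_meas {n : ℕ} {p : ℝ} (π : EuclideanSpace ℝ (Fin n)) : Measurable (JJ n p π) := by
  unfold JJ
  refine Measurable.sub (Measurable.sub (Measurable.const_mul (Measurable.pow_const (by fun_prop) _) _) measurable_const) ?_
  exact Measurable.indicator (by fun_prop) (measurableSet_le (by fun_prop) (by fun_prop))

lemma TT_meas {n : ℕ} {p : ℝ} : Measurable (TT n p) := by
  unfold TT
  exact Measurable.indicator (Measurable.pow_const (by fun_prop) _) (measurableSet_lt (by fun_prop) (by fun_prop))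

lemma TT_int {n : ℕ} {p : ℝ} {F : Measure (EuclideanSpace ℝ (Fin n))}
    (hAF : ∫⁻ u in {u : EuclideanSpace ℝ (Fin n) | 1 < ‖u‖}, ENNReal.ofReal (‖u‖ ^ p) ∂F ≠ ⊤) :
    Integrable (TT n p) F := by
  unfold TT
  have hm : MeasurableSet {u : EuclideanSpace ℝ (Fin n) | 1 < ‖u‖} :=
    measurableSet_lt (by fun_prop) (by fun_prop)
  apply (integrable_indicator_iff hm).2
  refine (lintegral_ofReal_ne_top_iff_integrable ?_ ?_).1 hAF
  · exact (Measurable.pow_const (by fun_prop) _).aestronglyMeasurable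
  · exact Filter.Eventually.of_forall fun u => Real.rpow_nonneg (norm_nonneg _) _

lemma DD_int {n : ℕ} {F : Measure (EuclideanSpace ℝ (Fin n))}
    (hFlevy : ∫⁻ u, ENNReal.ofReal (min (‖u‖ ^ (2 : ℕ)) 1) ∂F ≠ ⊤) :
    Integrable (fun u => min (‖u‖ ^ (2 : ℕ)) 1) F := by
  refine (lintegral_ofReal_ne_top_iff_integrable ?_ ?_).1 hFlevy
  · exact Measurable.aestronglyMeasurable (by fun_prop)
  · exact Filter.Eventually.of_forall fun u => by positivity

lemma JJ_int {n : ℕ} {p : ℝ} (hp0 : 0 < p) (hp1 : p < 1) {F : Measure (EuclideanSpace ℝ (Fin n))}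
    (hFlevy : ∫⁻ u, ENNReal.ofReal (min (‖u‖ ^ (2 : ℕ)) 1) ∂F ≠ ⊤)
    (hAF : ∫⁻ u in {u : EuclideanSpace ℝ (Fin n) | 1 < ‖u‖}, ENNReal.ofReal (‖u‖ ^ p) ∂F ≠ ⊤)
    {π : EuclideanSpace ℝ (Fin n)} (hπ : π ∈ CC n F) : Integrable (JJ n p π) F := by
  refine Integrable.mono' (((TT_int hAF).const_mul (p⁻¹ * ‖π‖ ^ p)).add
    ((DD_int hFlevy).const_mul ((1 - p) / p * ‖π‖ ^ 2 + p⁻¹))) (JJ_meas π).aestronglyMeasurable ?_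
  filter_upwards [ae_of_mem hπ] with u hu
  exact JJ_abs hp0 hp1 le_rfl hu

lemma gg_cont {n : ℕ} {p : ℝ} (hp0 : 0 < p) (hp1 : p < 1) {F : Measure (EuclideanSpace ℝ (Fin n))}
    (hFlevy : ∫⁻ u, ENNReal.ofReal (min (‖u‖ ^ (2 : ℕ)) 1) ∂F ≠ ⊤)
    (hAF : ∫⁻ u in {u : EuclideanSpace ℝ (Fin n) | 1 < ‖u‖}, ENNReal.ofReal (‖u‖ ^ p) ∂F ≠ ⊤)
    (b : EuclideanSpace ℝ (Fin n))
    (c : EuclideanSpace ℝ (Fin n) →ₗ[ℝ] EuclideanSpace ℝ (Fin n)) :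
    ContinuousOn (gg n p F b c) (CC n F) := by
  have hc : Continuous c := LinearMap.continuous_of_finiteDimensional c
  unfold gg
  refine ContinuousOn.sub (Continuous.continuousOn (by fun_prop)) ?_
  intro π hπ
  refine continuousWithinAt_of_dominated (bound := fun u => p⁻¹ * (‖π‖ + 1) ^ p * TT n p u +
      ((1 - p) / p * (‖π‖ + 1) ^ 2 + p⁻¹) * min (‖u‖ ^ (2 : ℕ)) 1) ?_ ?_ ?_ ?_
  · exact Filter.Eventually.of_forall fun x => (JJ_meas x).aestronglyMeasurable
  · have : Metric.ball π 1 ∈ 𝓝[CC n F] π := mem_nhdsWithin_of_mem_nhds (Metric.ball_mem_nhds _ one_pos)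
    filter_upwards [this, self_mem_nhdsWithin] with x hx hxC
    have hx' : ‖x‖ ≤ ‖π‖ + 1 := by
      rw [mem_ball_iff_norm] at hx
      linarith [norm_sub_norm_le x π]
    filter_upwards [ae_of_mem hxC] with u hu
    exact JJ_abs hp0 hp1 hx' hu
  · exact ((TT_int hAF).const_mul _).add ((DD_int hFlevy).const_mul _)
  · refine Filter.Eventually.of_forall fun u => Continuous.continuousWithinAt ?_
    unfold JJ
    refine Continuous.sub (Continuous.sub (Continuous.mul continuous_const (Continuous.rpow_const (by fun_prop) fun x => Or.inr hp0.le)) continuous_const) ?_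
    by_cases h : ‖u‖ ≤ 1
    · simp only [Set.indicator_of_mem (show u ∈ {u : EuclideanSpace ℝ (Fin n) | ‖u‖ ≤ 1} from h)]
      fun_prop
    · simp only [Set.indicator_of_notMem (show u ∉ {u : EuclideanSpace ℝ (Fin n) | ‖u‖ ≤ 1} from h)]
      fun_prop

lemma CC_closed {n : ℕ} {F : Measure (EuclideanSpace ℝ (Fin n))} : IsClosed (CC n F) := by
  rw [← isSeqClosed_iff_isClosed]
  intro x π hx hlim
  have : ∀ᵐ u ∂F, ∀ k, -1 ≤ ⟪x k, u⟫ := ae_all_iff.2 fun k => ae_of_mem (hx k)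
  have h2 : ∀ᵐ u ∂F, ¬ (1 + ⟪π, u⟫ < 0) := by
    filter_upwards [this] with u hu
    have : Filter.Tendsto (fun k => ⟪x k, u⟫) Filter.atTop (𝓝 ⟪π, u⟫) := hlim.inner tendsto_const_nhds
    have := ge_of_tendsto' this hu
    linarith
  rw [ae_iff] at h2
  simpa [CC] using h2

lemma psi_lsc {n : ℕ} {p : ℝ} (hp0 : 0 < p) (hp1 : p < 1) {F : Measure (EuclideanSpace ℝ (Fin n))}
    (hFlevy : ∫⁻ u, ENNReal.ofReal (min (‖u‖ ^ (2 : ℕ)) 1) ∂F ≠ ⊤)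
    (hAF : ∫⁻ u in {u : EuclideanSpace ℝ (Fin n) | 1 < ‖u‖}, ENNReal.ofReal (‖u‖ ^ p) ∂F ≠ ⊤)
    (b : EuclideanSpace ℝ (Fin n))
    (c : EuclideanSpace ℝ (Fin n) →ₗ[ℝ] EuclideanSpace ℝ (Fin n)) :
    LowerSemicontinuous (psi n p F b c) := by
  rw [lowerSemicontinuous_iff_isClosed_preimage]
  intro y
  by_cases hy : y = ⊤
  · subst hy; simp
  have h : ContinuousOn (psi n p F b c) (CC n F) :=
    (continuous_coe_real_ereal.comp_continuousOn (gg_cont hp0 hp1 hFlevy hAF b c)).congr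
      fun x hx => psi_of_mem hx
  have := h.preimage_isClosed_of_isClosed CC_closed (isClosed_Iic (a := y))
  convert this using 1
  ext x
  simp only [Set.mem_preimage, Set.mem_Iic, Set.mem_inter_iff]
  constructor
  · intro hx
    refine ⟨?_, hx⟩
    by_contra hn
    rw [psi_of_not_mem hn] at hx
    exact hy (top_le_iff.1 hx)
  · exact fun h => h.2

lemma aux_psd {n : ℕ} (c : EuclideanSpace ℝ (Fin n) →ₗ[ℝ] EuclideanSpace ℝ (Fin n))
    (hcsymm : ∀ x y : EuclideanSpace ℝ (Fin n), ⟪c x, y⟫ = ⟪x, c y⟫)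
    (hcpsd : ∀ x : EuclideanSpace ℝ (Fin n), 0 ≤ ⟪x, c x⟫) {y : EuclideanSpace ℝ (Fin n)}
    (hy : ⟪y, c y⟫ ≤ 0) : c y = 0 := by
  have hq := hcpsd (c y)
  set q := ⟪c y, c (c y)⟫ with hqd
  set s := ⟪c y, c y⟫ with hs
  obtain ⟨t, ht⟩ : ∃ t : ℝ, t * (q + 1) = s := ⟨s / (q + 1), by field_simp⟩
  have h := hcpsd (y - t • c y)
  have e : ⟪y - t • c y, c (y - t • c y)⟫ = ⟪y, c y⟫ - 2 * t * s + t ^ 2 * q := by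
    simp only [map_sub, map_smul, inner_sub_left, inner_sub_right, inner_smul_left,
      inner_smul_right, ← hcsymm y (c y)]
    simp only [← hs, ← hqd]
    simp
    ring
  rw [e] at h
  have ht0 : t = 0 := by
    have : t ^ 2 ≤ 0 := by
      rw [← ht] at h
      nlinarith [mul_nonneg (sq_nonneg t) hq, sq_nonneg t]
    exact pow_eq_zero_iff (two_ne_zero) |>.1 (le_antisymm this (sq_nonneg t))
  have : s = 0 := by rw [← ht, ht0]; ring
  exact inner_self_eq_zero.1 this

lemma rec_dir {n : ℕ} {p : ℝ} (hp0 : 0 < p) (hp1 : p < 1) {F : Measure (EuclideanSpace ℝ (Fin n))}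
    (hFlevy : ∫⁻ u, ENNReal.ofReal (min (‖u‖ ^ (2 : ℕ)) 1) ∂F ≠ ⊤)
    (hAF : ∫⁻ u in {u : EuclideanSpace ℝ (Fin n) | 1 < ‖u‖}, ENNReal.ofReal (‖u‖ ^ p) ∂F ≠ ⊤)
    (b : EuclideanSpace ℝ (Fin n))
    (c : EuclideanSpace ℝ (Fin n) →ₗ[ℝ] EuclideanSpace ℝ (Fin n))
    (hcsymm : ∀ x y : EuclideanSpace ℝ (Fin n), ⟪c x, y⟫ = ⟪x, c y⟫)
    (hcpsd : ∀ x : EuclideanSpace ℝ (Fin n), 0 ≤ ⟪x, c x⟫)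
    (x : ℕ → EuclideanSpace ℝ (Fin n)) (y : EuclideanSpace ℝ (Fin n))
    (hx : ∀ k, x k ∈ CC n F) (hg : ∀ k, gg n p F b c (x k) ≤ 0)
    (hpos : ∀ k, 0 < ‖x k‖) (ht : Filter.Tendsto (fun k => ‖x k‖) Filter.atTop Filter.atTop)
    (hw : Filter.Tendsto (fun k => (‖x k‖)⁻¹ • x k) Filter.atTop (𝓝 y)) :
    F {u : EuclideanSpace ℝ (Fin n) | ⟪y, u⟫ < 0} = 0 ∧ c y = 0 ∧
          ((∫⁻ u in {u : EuclideanSpace ℝ (Fin n) | ‖u‖ ≤ 1},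
              ENNReal.ofReal ⟪y, u⟫ ∂F : ℝ≥0∞) : EReal) ≤ ((⟪y, b⟫ : ℝ) : EReal) := by
  have hcont : Continuous c := LinearMap.continuous_of_finiteDimensional c
  set t : ℕ → ℝ := fun k => ‖x k‖ with htd
  set w : ℕ → EuclideanSpace ℝ (Fin n) := fun k => (t k)⁻¹ • x k with hwd
  have htw : ∀ k, x k = t k • w k := fun k => by
    simp only [hwd]; rw [smul_smul, mul_inv_cancel₀ (hpos k).ne', one_smul]
  have hinv : Filter.Tendsto (fun k => (t k)⁻¹) Filter.atTop (𝓝 0) := tendsto_inv_atTop_zero.comp ht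
  have hinvp : Filter.Tendsto (fun k => (t k)⁻¹ * (t k) ^ p) Filter.atTop (𝓝 0) := by
    have h1 : Filter.Tendsto (fun k => (t k) ^ (-(1 - p))) Filter.atTop (𝓝 0) :=
      (tendsto_rpow_neg_atTop (by linarith : 0 < 1 - p)).comp ht
    refine h1.congr fun k => ?_
    rw [← Real.rpow_neg_one, ← Real.rpow_add (hpos k)]
    congr 1; ring
  set A := ∫ u, TT n p u ∂F with hA
  set r : ℕ → ℝ := fun k => p⁻¹ * A * ((t k)⁻¹ * (t k) ^ p) with hrd
  have hr : Filter.Tendsto r Filter.atTop (𝓝 0) := by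
    simpa using hinvp.const_mul (p⁻¹ * A)
  have hwb : Filter.Tendsto (fun k => ⟪w k, b⟫ + r k) Filter.atTop (𝓝 ⟪y, b⟫) := by
    simpa using (Filter.Tendsto.inner hw (tendsto_const_nhds (x := b))).add hr
  -- the nonnegative integrand
  set K : ℕ → EuclideanSpace ℝ (Fin n) → ℝ :=
    fun k u => (t k)⁻¹ * (p⁻¹ * (t k) ^ p * TT n p u - JJ n p (x k) u) with hK
  have hKn : ∀ k, 0 ≤ᵐ[F] K k := fun k => by
    filter_upwards [ae_of_mem (hx k)] with u hu
    exact mul_nonneg (inv_nonneg.2 (hpos k).le) (sub_nonneg.2 (JJ_le hp0 hp1 le_rfl hu))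
  have hKi : ∀ k, Integrable (K k) F := fun k =>
    (((TT_int hAF).const_mul _).sub (JJ_int hp0 hp1 hFlevy hAF (hx k))).const_mul _
  have hKe : ∀ k, ∫ u, K k u ∂F = (t k)⁻¹ * gg n p F b c (x k) + ⟪w k, b⟫ -
      (1 - p) / 2 * (t k * ⟪w k, c (w k)⟫) + r k := fun k => by
    simp only [hK]
    rw [integral_const_mul, integral_sub ((TT_int hAF).const_mul _) (JJ_int hp0 hp1 hFlevy hAF (hx k)),
      integral_const_mul]
    have e1 : ⟪x k, b⟫ = t k * ⟪w k, b⟫ := by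
      conv_lhs => rw [htw k, real_inner_smul_left]
    have e2 : ⟪x k, c (x k)⟫ = t k * (t k * ⟪w k, c (w k)⟫) := by
      conv_lhs => rw [htw k, map_smul, real_inner_smul_left, real_inner_smul_right]
    simp only [gg, hrd]
    rw [e1, e2]
    have := (hpos k).ne'
    change t k ≠ 0 at this
    rw [← hA]
    field_simp
    ring
  have hgn : ∀ k, (t k)⁻¹ * gg n p F b c (x k) ≤ 0 := fun k =>
    mul_nonpos_of_nonneg_of_nonpos (inv_nonneg.2 (hpos k).le) (hg k)
  have hKp : ∀ k, 0 ≤ ∫ u, K k u ∂F := fun k => integral_nonneg_of_ae (hKn k)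
  have hqn : ∀ k, 0 ≤ (1 - p) / 2 * (t k * ⟪w k, c (w k)⟫) := fun k =>
    mul_nonneg (by linarith) (mul_nonneg (hpos k).le (hcpsd _))
  have hKle : ∀ k, ∫ u, K k u ∂F ≤ ⟪w k, b⟫ + r k := fun k => by
    rw [hKe k]; linarith [hgn k, hqn k]
  have hyb : 0 ≤ ⟪y, b⟫ := ge_of_tendsto' hwb fun k => (hKp k).trans (hKle k)
  refine ⟨?_, ?_, ?_⟩
  · have hall : ∀ᵐ u ∂F, ∀ k, -1 ≤ ⟪x k, u⟫ := ae_all_iff.2 fun k => ae_of_mem (hx k)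
    have h2 : ∀ᵐ u ∂F, ¬ (⟪y, u⟫ < 0) := by
      filter_upwards [hall] with u hu
      have h3 : Filter.Tendsto (fun k => ⟪w k, u⟫) Filter.atTop (𝓝 ⟪y, u⟫) :=
        hw.inner tendsto_const_nhds
      have h4 : Filter.Tendsto (fun k => -(t k)⁻¹) Filter.atTop (𝓝 0) := by simpa using hinv.neg
      have := le_of_tendsto_of_tendsto' h4 h3 (fun k => by
        have h5 := hu k
        simp only [hwd, real_inner_smul_left]
        have := mul_le_mul_of_nonneg_left h5 (inv_nonneg.2 (hpos k).le)
        change -(‖x k‖)⁻¹ ≤ (‖x k‖)⁻¹ * _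
        linarith)
      linarith
    rw [ae_iff] at h2
    simpa using h2
  · apply aux_psd c hcsymm hcpsd
    have h3 : Filter.Tendsto (fun k => (1 - p) / 2 * ⟪w k, c (w k)⟫) Filter.atTop
        (𝓝 ((1 - p) / 2 * ⟪y, c y⟫)) :=
      (hw.inner ((hcont.tendsto y).comp hw)).const_mul _
    have h4 := hinv.mul hwb
    have h5 := le_of_tendsto_of_tendsto' h3 h4 (fun k => by
      have h6 := hKp k
      rw [hKe k] at h6
      have h7 : t k * ((1 - p) / 2 * ⟪w k, c (w k)⟫) ≤ ⟪w k, b⟫ + r k := by linarith [hgn k]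
      rw [inv_mul_eq_div, le_div_iff₀ (hpos k)]
      change _ * t k ≤ _
      linarith)
    by_contra hcon
    have : 0 < (1 - p) / 2 * ⟪y, c y⟫ := mul_pos (by linarith) (not_le.1 hcon)
    simp at h5
    linarith
  · have hS : MeasurableSet {u : EuclideanSpace ℝ (Fin n) | ‖u‖ ≤ 1} :=
      measurableSet_le (by fun_prop) (by fun_prop)
    have hKm : ∀ k, Measurable (K k) := fun k =>
      ((TT_meas.const_mul _).sub (JJ_meas (x k))).const_mul _
    have hlim : ∀ u ∈ {u : EuclideanSpace ℝ (Fin n) | ‖u‖ ≤ 1},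
        Filter.Tendsto (fun k => K k u) Filter.atTop (𝓝 ⟪y, u⟫) := by
      intro u hu
      have e : ∀ k, K k u = ⟪w k, u⟫ + p⁻¹ * (t k)⁻¹ -
          p⁻¹ * ((t k)⁻¹ * (max (1 + ⟪x k, u⟫) 0) ^ p) := fun k => by
        have hu' : ¬ (1 < ‖u‖) := not_lt.2 hu
        simp only [hK, TT, JJ]
        rw [Set.indicator_of_mem hu, Set.indicator_of_notMem (by exact hu')]
        simp only [hwd, real_inner_smul_left]
        ring
      have hz : Filter.Tendsto (fun k => (t k)⁻¹ * (max (1 + ⟪x k, u⟫) 0) ^ p)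
          Filter.atTop (𝓝 0) := by
        have hub : Filter.Tendsto (fun k => (t k)⁻¹ + ((t k)⁻¹ * (t k) ^ p) * ‖u‖ ^ p)
            Filter.atTop (𝓝 0) := by simpa using hinv.add (hinvp.mul_const (‖u‖ ^ p))
        refine squeeze_zero (fun k => mul_nonneg (inv_nonneg.2 (hpos k).le)
          (Real.rpow_nonneg (le_max_right _ _) _)) (fun k => ?_) hub
        have h1 := aux_max_rpow_le hp0 hp1 (mul_nonneg (norm_nonneg _) (norm_nonneg _))
          (real_inner_le_norm (x k) u)
        rw [Real.mul_rpow (norm_nonneg _) (norm_nonneg _)] at h1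
        have := mul_le_mul_of_nonneg_left h1 (inv_nonneg.2 (hpos k).le)
        refine this.trans (le_of_eq ?_)
        simp only [htd]; ring
      simp only [e]
      have h3 : Filter.Tendsto (fun k => ⟪w k, u⟫) Filter.atTop (𝓝 ⟪y, u⟫) :=
        hw.inner tendsto_const_nhds
      simpa using (h3.add (hinv.const_mul p⁻¹)).sub (hz.const_mul p⁻¹)
    have hfat : ∫⁻ u in {u : EuclideanSpace ℝ (Fin n) | ‖u‖ ≤ 1}, ENNReal.ofReal ⟪y, u⟫ ∂F
        ≤ ENNReal.ofReal ⟪y, b⟫ := by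
      calc ∫⁻ u in {u : EuclideanSpace ℝ (Fin n) | ‖u‖ ≤ 1}, ENNReal.ofReal ⟪y, u⟫ ∂F
          = ∫⁻ u in {u : EuclideanSpace ℝ (Fin n) | ‖u‖ ≤ 1},
              Filter.liminf (fun k => ENNReal.ofReal (K k u)) Filter.atTop ∂F := by
            refine setLIntegral_congr_fun hS fun u hu => ?_
            exact ((ENNReal.continuous_ofReal.tendsto _).comp (hlim u hu)).liminf_eq.symm
        _ ≤ Filter.liminf (fun k => ∫⁻ u in {u : EuclideanSpace ℝ (Fin n) | ‖u‖ ≤ 1},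
              ENNReal.ofReal (K k u) ∂F) Filter.atTop :=
            lintegral_liminf_le' fun k => (hKm k).ennreal_ofReal.aemeasurable
        _ ≤ Filter.liminf (fun k => ENNReal.ofReal (⟪w k, b⟫ + r k)) Filter.atTop := by
            refine Filter.liminf_le_liminf (Filter.Eventually.of_forall fun k => ?_)
            refine (setLIntegral_le_lintegral _ _).trans ?_
            rw [← ofReal_integral_eq_lintegral_ofReal (hKi k) (hKn k)]
            exact ENNReal.ofReal_le_ofReal (hKle k)
        _ = ENNReal.ofReal ⟪y, b⟫ :=
            ((ENNReal.continuous_ofReal.tendsto _).comp hwb).liminf_eq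
    calc _ ≤ ((ENNReal.ofReal ⟪y, b⟫ : ℝ≥0∞) : EReal) := EReal.coe_ennreal_le_coe_ennreal_iff.2 hfat
      _ = _ := by rw [EReal.coe_ennreal_ofReal, max_eq_left hyb]

lemma psi_sub_null {n : ℕ} {p : ℝ} {F : Measure (EuclideanSpace ℝ (Fin n))}
    {b : EuclideanSpace ℝ (Fin n)}
    {c : EuclideanSpace ℝ (Fin n) →ₗ[ℝ] EuclideanSpace ℝ (Fin n)}
    (hcsymm : ∀ x y : EuclideanSpace ℝ (Fin n), ⟪c x, y⟫ = ⟪x, c y⟫)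
    {y : EuclideanSpace ℝ (Fin n)} (hcy : c y = 0)
    (hy : F {u : EuclideanSpace ℝ (Fin n) | ⟪y, u⟫ ≠ 0} = 0) (hyb : ⟪y, b⟫ = 0)
    (π : EuclideanSpace ℝ (Fin n)) : psi n p F b c (π - y) = psi n p F b c π := by
  have hae : ∀ᵐ u ∂F, ⟪y, u⟫ = 0 := by rw [ae_iff]; exact hy
  have h1 : F {u : EuclideanSpace ℝ (Fin n) | 1 + ⟪π - y, u⟫ < 0} =
      F {u : EuclideanSpace ℝ (Fin n) | 1 + ⟪π, u⟫ < 0} := by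
    apply measure_congr
    filter_upwards [hae] with u hu
    apply propext
    change 1 + ⟪π - y, u⟫ < 0 ↔ 1 + ⟪π, u⟫ < 0
    rw [inner_sub_left, hu, sub_zero]
  have h2 : gg n p F b c (π - y) = gg n p F b c π := by
    unfold gg
    have h3 : ∫ u, JJ n p (π - y) u ∂F = ∫ u, JJ n p π u ∂F := by
      apply integral_congr_ae
      filter_upwards [hae] with u hu
      simp only [JJ, Set.indicator, inner_sub_left, hu, sub_zero]
    have h4 : ⟪y, c π⟫ = 0 := by rw [← hcsymm, hcy, inner_zero_left]
    rw [h3, map_sub, hcy, sub_zero, inner_sub_left, inner_sub_left, hyb, h4, sub_zero, sub_zero]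
  by_cases h : π ∈ CC n F
  · rw [psi_of_mem h, psi_of_mem (show π - y ∈ CC n F from h1.trans h), h2]
  · rw [psi_of_not_mem h, psi_of_not_mem (fun h' => h (h1.symm.trans h'))]

/-- Let `C ⊆ ℝⁿ` be a polyhedral set containing `0` (an intersection of
finitely many half-spaces `⟨aᵢ,x⟩ ≤ βᵢ`), with recession cone
`rec(C) = {y | ∀ x ∈ C, ∀ t ≥ 0, x + t·y ∈ C}`. Suppose every nonzero
`y ∈ {π | F(Λ₋(π)) = 0, cπ = 0, ∫_{|u|≤1} ⟨π,u⟩ dF ≤ ⟨π,b⟩} ∩ rec(C)` belongs to the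
null-investment set `N`. Then `ψ` achieves its infimum over `C`: there is `π* ∈ C ∩ C₀` with
`ψ(π*) ≤ ψ(π)` for all `π ∈ C`. -/
theorem psi_attains_infimum_polyhedral
    (n : ℕ) (hn : 1 ≤ n) (p : ℝ) (hp0 : 0 < p) (hp1 : p < 1)
    (F : Measure (EuclideanSpace ℝ (Fin n)))
    (hF0 : F {(0 : EuclideanSpace ℝ (Fin n))} = 0)
    (hFlevy : ∫⁻ u, ENNReal.ofReal (min (‖u‖ ^ (2 : ℕ)) 1) ∂F ≠ ⊤)
    (hAF : ∫⁻ u in {u : EuclideanSpace ℝ (Fin n) | 1 < ‖u‖}, ENNReal.ofReal (‖u‖ ^ p) ∂F ≠ ⊤)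
    (b : EuclideanSpace ℝ (Fin n))
    (c : EuclideanSpace ℝ (Fin n) →ₗ[ℝ] EuclideanSpace ℝ (Fin n))
    (hcsymm : ∀ x y : EuclideanSpace ℝ (Fin n), ⟪c x, y⟫ = ⟪x, c y⟫)
    (hcpsd : ∀ x : EuclideanSpace ℝ (Fin n), 0 ≤ ⟪x, c x⟫)
    (C : Set (EuclideanSpace ℝ (Fin n)))
    (m : ℕ) (a : Fin m → EuclideanSpace ℝ (Fin n)) (β : Fin m → ℝ)
    (hCpoly : C = {x : EuclideanSpace ℝ (Fin n) | ∀ i : Fin m, ⟪a i, x⟫ ≤ β i})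
    (h0C : (0 : EuclideanSpace ℝ (Fin n)) ∈ C)
    (hrec : ∀ y : EuclideanSpace ℝ (Fin n), y ≠ 0 →
      y ∈ {π : EuclideanSpace ℝ (Fin n) |
          F {u : EuclideanSpace ℝ (Fin n) | ⟪π, u⟫ < 0} = 0 ∧ c π = 0 ∧
          ((∫⁻ u in {u : EuclideanSpace ℝ (Fin n) | ‖u‖ ≤ 1},
              ENNReal.ofReal ⟪π, u⟫ ∂F : ℝ≥0∞) : EReal) ≤ ((⟪π, b⟫ : ℝ) : EReal)} ∩
        {y : EuclideanSpace ℝ (Fin n) | ∀ x ∈ C, ∀ t : ℝ, 0 ≤ t → x + t • y ∈ C} →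
      (c y = 0 ∧ F {u : EuclideanSpace ℝ (Fin n) | ⟪y, u⟫ ≠ 0} = 0 ∧ ⟪y, b⟫ = 0)) :
    ∃ πs : EuclideanSpace ℝ (Fin n),
      πs ∈ C ∧
      F {u : EuclideanSpace ℝ (Fin n) | 1 + ⟪πs, u⟫ < 0} = 0 ∧
      ∀ π ∈ C, psi n p F b c πs ≤ psi n p F b c π := by
  have hlsc := psi_lsc hp0 hp1 hFlevy hAF b c
  have hCclosed : IsClosed C := by
    rw [hCpoly, Set.ofPred_forall]
    exact isClosed_iInter fun i => isClosed_le (by fun_prop) continuous_const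
  have h0CC : (0 : EuclideanSpace ℝ (Fin n)) ∈ CC n F := by simp [CC, not_lt.2 zero_le_one]
  have hpsi0 : psi n p F b c 0 = 0 := by
    rw [psi_of_mem h0CC]
    simp [gg, JJ]
  have key : ∃ R : ℝ, 0 ≤ R ∧ ∀ q ∈ C, psi n p F b c q ≤ 0 →
      ∃ q' ∈ C, ‖q'‖ ≤ R ∧ psi n p F b c q' ≤ psi n p F b c q := by
    by_contra hcon
    push Not at hcon
    have hex : ∀ k : ℕ, ∃ x ∈ C, psi n p F b c x ≤ 0 ∧ (k : ℝ) + 1 < ‖x‖ ∧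
        ∀ z ∈ C, psi n p F b c z ≤ psi n p F b c x → ‖x‖ ≤ ‖z‖ := by
      intro k
      obtain ⟨q, hqC, hq0, hq⟩ := hcon (k + 1) (by positivity)
      have hcl : IsClosed (C ∩ psi n p F b c ⁻¹' Set.Iic (psi n p F b c q)) :=
        hCclosed.inter (hlsc.isClosed_preimage _)
      obtain ⟨x, hx, hxd⟩ := hcl.exists_infDist_eq_dist ⟨q, hqC, le_refl (psi n p F b c q)⟩ 0
      have hxq : psi n p F b c x ≤ psi n p F b c q := hx.2
      refine ⟨x, hx.1, hxq.trans hq0, ?_, ?_⟩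
      · by_contra hh
        exact absurd hxq (not_le.2 (hq x hx.1 (not_lt.1 hh)))
      · intro z hz hzx
        have := Metric.infDist_le_dist_of_mem (x := 0) (show z ∈ C ∩ psi n p F b c ⁻¹' Set.Iic (psi n p F b c q) from ⟨hz, hzx.trans hxq⟩)
        rw [hxd, dist_zero_left, dist_zero_left] at this
        exact this
    choose x hxC hx0 hxk hxmin using hex
    have hpos : ∀ k, 0 < ‖x k‖ := fun k => lt_trans (by positivity) (hxk k)
    have ht : Filter.Tendsto (fun k => ‖x k‖) Filter.atTop Filter.atTop :=
      Filter.tendsto_atTop_mono (fun k => by linarith [hxk k]) tendsto_natCast_atTop_atTop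
    obtain ⟨y, hyS, φ, hφ, hlim⟩ := (isCompact_sphere (0 : EuclideanSpace ℝ (Fin n)) 1).tendsto_subseq
      (x := fun k => (‖x k‖)⁻¹ • x k) (fun k => by
        rw [mem_sphere_zero_iff_norm, norm_smul, norm_inv, norm_norm, inv_mul_cancel₀ (hpos k).ne'])
    have hy1 : ‖y‖ = 1 := by simpa using hyS
    have htφ : Filter.Tendsto (fun k => ‖x (φ k)‖) Filter.atTop Filter.atTop :=
      ht.comp hφ.tendsto_atTop
    have hinv : Filter.Tendsto (fun k => (‖x (φ k)‖)⁻¹) Filter.atTop (𝓝 0) :=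
      tendsto_inv_atTop_zero.comp htφ
    have hmem : ∀ k, x k ∈ CC n F := fun k => by
      by_contra hh
      have := hx0 k
      rw [psi_of_not_mem hh] at this
      simp at this
    have hgle : ∀ k, gg n p F b c (x k) ≤ 0 := fun k => by
      have := hx0 k
      rw [psi_of_mem (hmem k)] at this
      exact_mod_cast this
    have hR := rec_dir hp0 hp1 hFlevy hAF b c hcsymm hcpsd (fun k => x (φ k)) y
      (fun k => hmem _) (fun k => hgle _) (fun k => hpos _) htφ hlim
    have hai : ∀ i, Filter.Tendsto (fun k => (‖x (φ k)‖)⁻¹ * ⟪a i, x (φ k)⟫) Filter.atTop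
        (𝓝 ⟪a i, y⟫) := fun i => by
      have : Filter.Tendsto (fun k => ⟪a i, (‖x (φ k)‖)⁻¹ • x (φ k)⟫) Filter.atTop (𝓝 ⟪a i, y⟫) :=
        tendsto_const_nhds.inner hlim
      simpa only [real_inner_smul_right] using this
    have hxa : ∀ k i, ⟪a i, x k⟫ ≤ β i := fun k i => by
      have := hxC k
      rw [hCpoly] at this
      exact this i
    have hay : ∀ i, ⟪a i, y⟫ ≤ 0 := fun i => by
      have h2 : Filter.Tendsto (fun k => (‖x (φ k)‖)⁻¹ * β i) Filter.atTop (𝓝 0) := by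
        simpa using hinv.mul_const (β i)
      exact le_of_tendsto_of_tendsto' (hai i) h2 fun k =>
        mul_le_mul_of_nonneg_left (hxa _ i) (inv_nonneg.2 (norm_nonneg _))
    obtain ⟨hcy, hFy, hby⟩ := hrec y (by rintro rfl; simp at hy1) ⟨hR, by
      intro z hz s hs
      rw [hCpoly] at hz ⊢
      intro i
      rw [inner_add_right, real_inner_smul_right]
      have := mul_nonpos_of_nonneg_of_nonpos hs (hay i)
      linarith [hz i]⟩
    have hev : ∀ i, ∀ᶠ k in Filter.atTop, ⟪a i, x (φ k) - y⟫ ≤ β i := fun i => by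
      rcases (hay i).lt_or_eq with h | h
      · have h2 : Filter.Tendsto (fun k => (‖x (φ k)‖)⁻¹ * (β i + ⟪a i, y⟫)) Filter.atTop (𝓝 0) := by
          simpa using hinv.mul_const (β i + ⟪a i, y⟫)
        filter_upwards [(hai i).eventually_lt h2 h] with k hk
        have := lt_of_mul_lt_mul_left hk (inv_nonneg.2 (norm_nonneg _))
        rw [inner_sub_right]; linarith
      · filter_upwards with k
        rw [inner_sub_right, h, sub_zero]; exact hxa _ i
    have hevn : ∀ᶠ k in Filter.atTop, ‖x (φ k) - y‖ < ‖x (φ k)‖ := by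
      have h1 : Filter.Tendsto (fun k => (‖x (φ k)‖)⁻¹ * ⟪x (φ k), y⟫) Filter.atTop (𝓝 1) := by
        have : Filter.Tendsto (fun k => ⟪(‖x (φ k)‖)⁻¹ • x (φ k), y⟫) Filter.atTop (𝓝 ⟪y, y⟫) :=
          hlim.inner tendsto_const_nhds
        rw [real_inner_self_eq_norm_sq, hy1, one_pow] at this
        simpa only [real_inner_smul_left] using this
      have h2 : Filter.Tendsto (fun k => (‖x (φ k)‖)⁻¹ * 1) Filter.atTop (𝓝 0) := by
        simpa using hinv
      filter_upwards [h2.eventually_lt h1 zero_lt_one] with k hk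
      have hk' := lt_of_mul_lt_mul_left hk (inv_nonneg.2 (norm_nonneg _))
      have := norm_sub_sq_real (x (φ k)) y
      rw [hy1] at this
      exact lt_of_pow_lt_pow_left₀ 2 (norm_nonneg _) (by linarith)
    obtain ⟨k, hk1, hk2⟩ := ((Filter.eventually_all.2 hev).and hevn).exists
    have := hxmin (φ k) (x (φ k) - y) (by rw [hCpoly]; exact hk1)
      (psi_sub_null hcsymm hcy hFy hby _).le
    linarith
  obtain ⟨R, hR0, hR⟩ := key
  obtain ⟨πs, hπs, hmin⟩ := LowerSemicontinuousOn.exists_isMinOn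
    (s := C ∩ Metric.closedBall 0 R) ⟨0, h0C, by simpa using hR0⟩
    ((isCompact_closedBall _ _).inter_left hCclosed) (hlsc.lowerSemicontinuousOn _)
  have hle0 : psi n p F b c πs ≤ 0 := by
    rw [← hpsi0]; exact hmin ⟨h0C, by simpa using hR0⟩
  refine ⟨πs, hπs.1, ?_, ?_⟩
  · by_contra hh
    rw [psi_of_not_mem hh] at hle0
    simp at hle0
  · intro π hπ
    rcases le_total (psi n p F b c π) 0 with h | h
    · obtain ⟨q, hqC, hqR, hq⟩ := hR π hπ h
      exact (hmin ⟨hqC, by simpa using hqR⟩ : psi n p F b c πs ≤ psi n p F b c q).trans hq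
    · exact hle0.trans h
end

section
/- Let W, Ŵ : ℝᵈ → ℝ be measurable, let Z ∈ ℝᵈ, and assume all the integrals defining φ(π,Z,W), φ(π,Z,Ŵ) (for each π ∈ K) and f(Z,W), f(Z,Ŵ) converge absolutely, with sup_{π∈K} φ(π,Z,W) and sup_{π∈K} φ(π,Z,Ŵ) finite. Define Ψ(π;u,v) := ( ∫₀¹ e^{λW(v)+(1−λ)Ŵ(v)} dλ ) · (1+⟨π,u⟩)^p − 1, and γ(u,v) := sup_{π∈K} Ψ(π;u,v) if W(v) > Ŵ(v), γ(u,v) := inf_{π∈K} Ψ(π;u,v) if W(v) ≤ Ŵ(v). Assume γ is real-valued F-a.e. and that (u,v) ↦ γ(u,v)·(W(v) − Ŵ(v)) is F-integrable. Then f(Z,W) − f(Z,Ŵ) ≤ ∫ γ(u,v)·(W(v) − Ŵ(v)) F(d(u,v)). -/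
open MeasureTheory
open scoped RealInnerProductSpace ENNReal

/-- `φ(π,Z,W)` from the paper: with `F^R = F.map Prod.fst` the first marginal,
`φ(π,Z,W) = ⟨π, b + c^{RY}Z⟩ + ((p−1)/2)⟨π,c^Rπ⟩
  + ∫ (p⁻¹(1+⟨π,u⟩)^p − p⁻¹ − ⟨π,u⟩·1_{|u|≤1}) dF^R
  + ∫ (p⁻¹(1+⟨π,u⟩)^p − p⁻¹)(e^{W(v)} − 1) dF`. -/
noncomputable def phi14 (n d : ℕ) (p : ℝ)
    (F : Measure (EuclideanSpace ℝ (Fin n) × EuclideanSpace ℝ (Fin d)))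
    (b : EuclideanSpace ℝ (Fin n))
    (cR : EuclideanSpace ℝ (Fin n) →ₗ[ℝ] EuclideanSpace ℝ (Fin n))
    (cRY : EuclideanSpace ℝ (Fin d) →ₗ[ℝ] EuclideanSpace ℝ (Fin n))
    (π : EuclideanSpace ℝ (Fin n)) (Z : EuclideanSpace ℝ (Fin d))
    (W : EuclideanSpace ℝ (Fin d) → ℝ) : ℝ :=
  ⟪π, b + cRY Z⟫ + ((p - 1) / 2) * ⟪π, cR π⟫ +
    (∫ u, (p⁻¹ * (1 + ⟪π, u⟫) ^ p - p⁻¹ -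
      Set.indicator {u : EuclideanSpace ℝ (Fin n) | ‖u‖ ≤ 1}
        (fun u => ⟪π, u⟫) u) ∂(F.map Prod.fst)) +
    ∫ uv : EuclideanSpace ℝ (Fin n) × EuclideanSpace ℝ (Fin d),
      (p⁻¹ * (1 + ⟪π, uv.1⟫) ^ p - p⁻¹) * (Real.exp (W uv.2) - 1) ∂F

/-- The driver `f(Z,W) = (1/2)⟨Z,c^YZ⟩ + p·sup_{π∈K} φ(π,Z,W) − ∫ (W(v)+1−e^{W(v)}) dF^Y`,
with `F^Y = F.map Prod.snd` the second marginal. -/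
noncomputable def f14 (n d : ℕ) (p : ℝ)
    (F : Measure (EuclideanSpace ℝ (Fin n) × EuclideanSpace ℝ (Fin d)))
    (b : EuclideanSpace ℝ (Fin n))
    (cR : EuclideanSpace ℝ (Fin n) →ₗ[ℝ] EuclideanSpace ℝ (Fin n))
    (cRY : EuclideanSpace ℝ (Fin d) →ₗ[ℝ] EuclideanSpace ℝ (Fin n))
    (cY : EuclideanSpace ℝ (Fin d) →ₗ[ℝ] EuclideanSpace ℝ (Fin d))
    (K : Set (EuclideanSpace ℝ (Fin n)))
    (Z : EuclideanSpace ℝ (Fin d)) (W : EuclideanSpace ℝ (Fin d) → ℝ) : ℝ :=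
  (1 / 2) * ⟪Z, cY Z⟫ +
    p * sSup ((fun π => phi14 n d p F b cR cRY π Z W) '' K) -
    ∫ v, (W v + 1 - Real.exp (W v)) ∂(F.map Prod.snd)

/-- `Ψ(π;u,v) := (∫₀¹ e^{λW(v)+(1−λ)Ŵ(v)} dλ)·(1+⟨π,u⟩)^p − 1`. -/
noncomputable def Psi14 (n d : ℕ) (p : ℝ)
    (W Wh : EuclideanSpace ℝ (Fin d) → ℝ)
    (π u : EuclideanSpace ℝ (Fin n)) (v : EuclideanSpace ℝ (Fin d)) : ℝ :=
  (∫ l in (0 : ℝ)..1, Real.exp (l * W v + (1 - l) * Wh v)) * (1 + ⟪π, u⟫) ^ p - 1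

/-- `γ(u,v) := sup_{π∈K} Ψ(π;u,v)` if `W(v) > Ŵ(v)`, and `inf_{π∈K} Ψ(π;u,v)` if
`W(v) ≤ Ŵ(v)`. -/
noncomputable def gamma14 (n d : ℕ) (p : ℝ)
    (K : Set (EuclideanSpace ℝ (Fin n)))
    (W Wh : EuclideanSpace ℝ (Fin d) → ℝ)
    (uv : EuclideanSpace ℝ (Fin n) × EuclideanSpace ℝ (Fin d)) : ℝ :=
  if Wh uv.2 < W uv.2 then
    sSup ((fun π => Psi14 n d p W Wh π uv.1 uv.2) '' K)
  else
    sInf ((fun π => Psi14 n d p W Wh π uv.1 uv.2) '' K)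

theorem exp_avg14 (a b : ℝ) :
    (∫ l in (0 : ℝ)..1, Real.exp (l * a + (1 - l) * b)) * (a - b) = Real.exp a - Real.exp b := by
  rw [← intervalIntegral.integral_mul_const]
  have h := intervalIntegral.integral_eq_sub_of_hasDerivAt (a := (0 : ℝ)) (b := 1)
    (f := fun l : ℝ => Real.exp (l * a + (1 - l) * b))
    (f' := fun l : ℝ => Real.exp (l * a + (1 - l) * b) * (a - b)) ?_ ?_
  · rw [h]; simp
  · intro x _
    have h1 : HasDerivAt (fun l : ℝ => l * a + (1 - l) * b) (a - b) x := by
      have h2 := ((hasDerivAt_id x).mul_const (a - b)).add_const b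
      simp only [id, one_mul] at h2
      refine h2.congr_of_eventuallyEq (Filter.Eventually.of_forall fun l => ?_)
      simp only
      ring
    exact h1.exp
  · apply Continuous.intervalIntegrable
    fun_prop

theorem pointwise14 (n d : ℕ) (p : ℝ) 
    (K : Set (EuclideanSpace ℝ (Fin n)))
    (W Wh : EuclideanSpace ℝ (Fin d) → ℝ)
    (uv : EuclideanSpace ℝ (Fin n) × EuclideanSpace ℝ (Fin d))
    (h : if Wh uv.2 < W uv.2 then
        BddAbove ((fun π => Psi14 n d p W Wh π uv.1 uv.2) '' K)
      else
        BddBelow ((fun π => Psi14 n d p W Wh π uv.1 uv.2) '' K))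
    (π : EuclideanSpace ℝ (Fin n)) (hπ : π ∈ K) :
    (1 + ⟪π, uv.1⟫) ^ p * (Real.exp (W uv.2) - Real.exp (Wh uv.2)) - (W uv.2 - Wh uv.2) ≤
      gamma14 n d p K W Wh uv * (W uv.2 - Wh uv.2) := by
  have e : (1 + ⟪π, uv.1⟫) ^ p * (Real.exp (W uv.2) - Real.exp (Wh uv.2)) - (W uv.2 - Wh uv.2)
      = Psi14 n d p W Wh π uv.1 uv.2 * (W uv.2 - Wh uv.2) := by
    rw [← exp_avg14, Psi14]; ring
  rw [e, gamma14]
  split_ifs at h ⊢ with hlt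
  · exact mul_le_mul_of_nonneg_right (le_csSup h ⟨π, hπ, rfl⟩) (by linarith)
  · exact mul_le_mul_of_nonpos_right (csInf_le h ⟨π, hπ, rfl⟩) (by linarith)

/-- One-sided Lipschitz-type estimate on the driver:
under absolute convergence of all the integrals defining `φ` and `f`, finiteness of the
suprema over `K`, `γ` being real-valued `F`-a.e. (the relevant sup/inf being attained in `ℝ`),
and `F`-integrability of `(u,v) ↦ γ(u,v)·(W(v) − Ŵ(v))`, one has
`f(Z,W) − f(Z,Ŵ) ≤ ∫ γ(u,v)·(W(v) − Ŵ(v)) dF`. -/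
theorem driver_comparison_estimate
    (n d : ℕ) (hn : 1 ≤ n) (hd : 1 ≤ d) (p : ℝ) (hp : p < 1) (hp0 : p ≠ 0)
    (F : Measure (EuclideanSpace ℝ (Fin n) × EuclideanSpace ℝ (Fin d)))
    (b : EuclideanSpace ℝ (Fin n))
    (cR : EuclideanSpace ℝ (Fin n) →ₗ[ℝ] EuclideanSpace ℝ (Fin n))
    (cRY : EuclideanSpace ℝ (Fin d) →ₗ[ℝ] EuclideanSpace ℝ (Fin n))
    (cY : EuclideanSpace ℝ (Fin d) →ₗ[ℝ] EuclideanSpace ℝ (Fin d))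
    (K : Set (EuclideanSpace ℝ (Fin n))) (hKne : K.Nonempty)
    (hK : ∀ π ∈ K,
      (F.map Prod.fst) {u : EuclideanSpace ℝ (Fin n) | 1 + ⟪π, u⟫ < 0} = 0)
    (W Wh : EuclideanSpace ℝ (Fin d) → ℝ)
    (hWmeas : Measurable W) (hWhmeas : Measurable Wh)
    (Z : EuclideanSpace ℝ (Fin d))
    -- absolute convergence of all the integrals defining φ(π,Z,W), φ(π,Z,Ŵ) on K
    (hint1 : ∀ π ∈ K, Integrable
      (fun u : EuclideanSpace ℝ (Fin n) => p⁻¹ * (1 + ⟪π, u⟫) ^ p - p⁻¹ -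
        Set.indicator {u : EuclideanSpace ℝ (Fin n) | ‖u‖ ≤ 1} (fun u => ⟪π, u⟫) u)
      (F.map Prod.fst))
    (hint2W : ∀ π ∈ K, Integrable
      (fun uv : EuclideanSpace ℝ (Fin n) × EuclideanSpace ℝ (Fin d) =>
        (p⁻¹ * (1 + ⟪π, uv.1⟫) ^ p - p⁻¹) * (Real.exp (W uv.2) - 1)) F)
    (hint2Wh : ∀ π ∈ K, Integrable
      (fun uv : EuclideanSpace ℝ (Fin n) × EuclideanSpace ℝ (Fin d) =>
        (p⁻¹ * (1 + ⟪π, uv.1⟫) ^ p - p⁻¹) * (Real.exp (Wh uv.2) - 1)) F)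
    -- absolute convergence of the integrals defining f(Z,W), f(Z,Ŵ)
    (hint3W : Integrable
      (fun v : EuclideanSpace ℝ (Fin d) => W v + 1 - Real.exp (W v)) (F.map Prod.snd))
    (hint3Wh : Integrable
      (fun v : EuclideanSpace ℝ (Fin d) => Wh v + 1 - Real.exp (Wh v)) (F.map Prod.snd))
    -- sup_{π∈K} φ(π,Z,W) and sup_{π∈K} φ(π,Z,Ŵ) are finite
    (hbddW : BddAbove ((fun π => phi14 n d p F b cR cRY π Z W) '' K))
    (hbddWh : BddAbove ((fun π => phi14 n d p F b cR cRY π Z Wh) '' K))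
    -- γ is real-valued F-a.e. (the relevant sup is bounded above / inf bounded below)
    (hγreal : ∀ᵐ uv ∂F,
      if Wh uv.2 < W uv.2 then
        BddAbove ((fun π => Psi14 n d p W Wh π uv.1 uv.2) '' K)
      else
        BddBelow ((fun π => Psi14 n d p W Wh π uv.1 uv.2) '' K))
    -- γ·(W − Ŵ) is F-integrable
    (hγint : Integrable
      (fun uv : EuclideanSpace ℝ (Fin n) × EuclideanSpace ℝ (Fin d) =>
        gamma14 n d p K W Wh uv * (W uv.2 - Wh uv.2)) F) :
    f14 n d p F b cR cRY cY K Z W - f14 n d p F b cR cRY cY K Z Wh ≤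
      ∫ uv : EuclideanSpace ℝ (Fin n) × EuclideanSpace ℝ (Fin d),
        gamma14 n d p K W Wh uv * (W uv.2 - Wh uv.2) ∂F := by
  have m3W := hint3W.comp_measurable measurable_snd
  have m3Wh := hint3Wh.comp_measurable measurable_snd
  have i3W := integral_map (μ := F) measurable_snd.aemeasurable hint3W.aestronglyMeasurable
  have i3Wh := integral_map (μ := F) measurable_snd.aemeasurable hint3Wh.aestronglyMeasurable
  simp only [Function.comp_def] at m3W m3Wh
  set G := ∫ uv : EuclideanSpace ℝ (Fin n) × EuclideanSpace ℝ (Fin d),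
        gamma14 n d p K W Wh uv * (W uv.2 - Wh uv.2) ∂F with hG
  unfold f14
  rw [i3W, i3Wh]
  set A := ∫ uv : EuclideanSpace ℝ (Fin n) × EuclideanSpace ℝ (Fin d),
    (W uv.2 + 1 - Real.exp (W uv.2)) ∂F with hA
  set B := ∫ uv : EuclideanSpace ℝ (Fin n) × EuclideanSpace ℝ (Fin d),
    (Wh uv.2 + 1 - Real.exp (Wh uv.2)) ∂F with hB
  have key : ∀ π ∈ K, p * phi14 n d p F b cR cRY π Z W - p * phi14 n d p F b cR cRY π Z Wh
      ≤ G + A - B := by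
    intro π hπ
    have e : p * phi14 n d p F b cR cRY π Z W - p * phi14 n d p F b cR cRY π Z Wh - A + B
        = ∫ uv : EuclideanSpace ℝ (Fin n) × EuclideanSpace ℝ (Fin d),
          (p * ((p⁻¹ * (1 + ⟪π, uv.1⟫) ^ p - p⁻¹) * (Real.exp (W uv.2) - 1))
          - p * ((p⁻¹ * (1 + ⟪π, uv.1⟫) ^ p - p⁻¹) * (Real.exp (Wh uv.2) - 1))
          - (W uv.2 + 1 - Real.exp (W uv.2))
          + (Wh uv.2 + 1 - Real.exp (Wh uv.2))) ∂F := by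
      rw [integral_add (by exact (((hint2W π hπ).const_mul p).sub ((hint2Wh π hπ).const_mul p)).sub m3W) m3Wh,
        integral_sub (by exact ((hint2W π hπ).const_mul p).sub ((hint2Wh π hπ).const_mul p)) m3W,
        integral_sub ((hint2W π hπ).const_mul p) ((hint2Wh π hπ).const_mul p),
        integral_const_mul, integral_const_mul]
      unfold phi14
      ring
    have l : _ ≤ G := integral_mono_ae
      (((((hint2W π hπ).const_mul p).sub ((hint2Wh π hπ).const_mul p)).sub m3W).add m3Wh) hγint (by
        filter_upwards [hγreal] with uv h
        have := pointwise14 n d p K W Wh uv h π hπ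
        refine le_trans (le_of_eq ?_) this
        simp only [Pi.add_apply, Pi.sub_apply]
        field_simp
        ring)
    simp only [Pi.add_apply, Pi.sub_apply] at l
    linarith
  suffices h : p * sSup ((fun π => phi14 n d p F b cR cRY π Z W) '' K)
      ≤ p * sSup ((fun π => phi14 n d p F b cR cRY π Z Wh) '' K) + (G + A - B) by linarith
  rcases lt_or_gt_of_ne hp0 with hneg | hpos
  · have : sSup ((fun π => phi14 n d p F b cR cRY π Z Wh) '' K) ≤
        sSup ((fun π => phi14 n d p F b cR cRY π Z W) '' K) - (G + A - B) / p := by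
      apply csSup_le (hKne.image _)
      rintro _ ⟨π, hπ, rfl⟩
      have h1 := le_csSup hbddW ⟨π, hπ, rfl⟩
      have h2 : (G + A - B) / p
          ≤ phi14 n d p F b cR cRY π Z W - phi14 n d p F b cR cRY π Z Wh := by
        rw [div_le_iff_of_neg hneg]
        linarith [key π hπ]
      simp only at h1 ⊢
      linarith
    have h3 := mul_le_mul_of_nonpos_left this hneg.le
    rw [mul_sub, mul_div_cancel₀ _ hp0] at h3
    linarith
  · have : sSup ((fun π => phi14 n d p F b cR cRY π Z W) '' K) ≤
        sSup ((fun π => phi14 n d p F b cR cRY π Z Wh) '' K) + (G + A - B) / p := by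
      apply csSup_le (hKne.image _)
      rintro _ ⟨π, hπ, rfl⟩
      have h1 := le_csSup hbddWh ⟨π, hπ, rfl⟩
      have h2 : phi14 n d p F b cR cRY π Z W - phi14 n d p F b cR cRY π Z Wh
          ≤ (G + A - B) / p := by
        rw [le_div_iff₀ hpos]
        linarith [key π hπ]
      simp only at h1 ⊢
      linarith
    have h3 := mul_le_mul_of_nonneg_left this hpos.le
    rw [mul_add, mul_div_cancel₀ _ hp0] at h3
    linarith
end
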